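/- Let 𝕏_i = (X_i, d_{X_i}, ξ_i), i = 1, 2, be mm-spaces, let (Z, d_Z) be a compact metric space with diameter M := sup_{z, z' ∈ Z} d_Z(z, z'), and let λ > 0. If π is a minimizer of the EW_λ problem, then Σ_{i=1,2} GW²(𝕏_i, (Z, d_Z, P_{i,#}π)) ≤ M²/λ + GWA(𝕏₁) + GWA(𝕏₂), where GWA(𝕏) := inf_{ζ ∈ 𝒫(Z)} GW²(𝕏, (Z, d_Z, ζ)). -/

import Mathlib

/-!
Comparing the minimizer `π` with the product plan `ζ₁ ⊗ ζ₂` of arbitrary `ζ₁, ζ₂ ∈ 𝒫(Z)`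
gives the bound. The transport cost of `π` is nonnegative, that of `ζ₁ ⊗ ζ₂` is at most the
squared diameter `M²` (`integral_dist_sq_le`), and the marginals of `ζ₁ ⊗ ζ₂` are `ζ₁` and `ζ₂`.
Hence `λ Σ GW²(𝕏ᵢ, Pᵢ π) ≤ M² + λ Σ GW²(𝕏ᵢ, ζᵢ)`; divide by `λ` and take the infimum over
`ζ₁` and `ζ₂` separately. Nonnegativity of the objectives (`GWsq_nonneg`, `EWobj_nonneg`) makes
the real-valued infimum defining `EW_λ²` a genuine lower bound.
-/

open MeasureTheory Filter Topology

noncomputable section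

/-- The set of couplings (transport plans) between two measures. -/
def couplings {X Y : Type*} [MeasurableSpace X] [MeasurableSpace Y]
    (μ : Measure X) (ν : Measure Y) : Set (Measure (X × Y)) :=
  {π | π.map Prod.fst = μ ∧ π.map Prod.snd = ν}

/-- Squared Wasserstein-2 distance. -/
noncomputable def W2sq {Z : Type*} [MetricSpace Z] [MeasurableSpace Z]
    (μ ν : Measure Z) : ℝ :=
  ⨅ π : couplings μ ν, ∫ p : Z × Z, dist p.1 p.2 ^ 2 ∂(π.1)

/-- Wasserstein-2 distance. -/
noncomputable def W2 {Z : Type*} [MetricSpace Z] [MeasurableSpace Z]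
    (μ ν : Measure Z) : ℝ := Real.sqrt (W2sq μ ν)

/-- The Gromov--Wasserstein objective of a plan `γ`. -/
noncomputable def GWobj {X Y : Type*} [MetricSpace X] [MetricSpace Y]
    [MeasurableSpace X] [MeasurableSpace Y]
    (γ : Measure (X × Y)) : ℝ :=
  ∫ q : (X × Y) × (X × Y),
    (dist q.1.1 q.2.1 - dist q.1.2 q.2.2) ^ 2 ∂(γ.prod γ)

/-- Squared Gromov--Wasserstein distance between `(X, d_X, ξ)` and `(Y, d_Y, ν)`. -/
noncomputable def GWsq {X Y : Type*} [MetricSpace X] [MetricSpace Y]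
    [MeasurableSpace X] [MeasurableSpace Y]
    (ξ : Measure X) (ν : Measure Y) : ℝ :=
  ⨅ γ : couplings ξ ν, GWobj γ.1

/-- The support of a measure: points all of whose open neighborhoods have positive measure. -/
def msupport {X : Type*} [TopologicalSpace X] [MeasurableSpace X] (ξ : Measure X) : Set X :=
  {x | ∀ U : Set X, IsOpen U → x ∈ U → 0 < ξ U}

/-- Pushforward `I,#ξ` of `ξ` under a map defined on the support of `ξ`. -/
noncomputable def pushSupp {X Z : Type*} [MetricSpace X] [MetricSpace Z]
    [MeasurableSpace X] [MeasurableSpace Z]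
    (ξ : Measure X) (I : msupport ξ → Z) : Measure Z :=
  Measure.map I (Measure.comap Subtype.val ξ)

/-- The objective of the `EW_λ` problem evaluated at a plan `π` on `Z × Z`. -/
noncomputable def EWobj {X₁ X₂ Z : Type*} [MetricSpace X₁] [MetricSpace X₂] [MetricSpace Z]
    [MeasurableSpace X₁] [MeasurableSpace X₂] [MeasurableSpace Z]
    (lam : ℝ) (ξ₁ : Measure X₁) (ξ₂ : Measure X₂) (π : Measure (Z × Z)) : ℝ :=
  (∫ p : Z × Z, dist p.1 p.2 ^ 2 ∂π)
    + lam * (GWsq ξ₁ (π.map Prod.fst) + GWsq ξ₂ (π.map Prod.snd))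

/-- `EW_λ(𝕏₁, 𝕏₂)²`: infimum of the `EW_λ` objective over probability measures on `Z × Z`. -/
noncomputable def EWlamSq {X₁ X₂ : Type*} (Z : Type*) [MetricSpace X₁] [MetricSpace X₂] [MetricSpace Z]
    [MeasurableSpace X₁] [MeasurableSpace X₂] [MeasurableSpace Z]
    (lam : ℝ) (ξ₁ : Measure X₁) (ξ₂ : Measure X₂) : ℝ :=
  ⨅ π : {π : Measure (Z × Z) // IsProbabilityMeasure π}, EWobj lam ξ₁ ξ₂ π.1

/-- `EW(𝕏₁, 𝕏₂)²`: infimum over isometric embeddings of the supports into `Z`. -/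
noncomputable def EWsq {X₁ X₂ : Type*} (Z : Type*) [MetricSpace X₁] [MetricSpace X₂] [MetricSpace Z]
    [MeasurableSpace X₁] [MeasurableSpace X₂] [MeasurableSpace Z]
    (ξ₁ : Measure X₁) (ξ₂ : Measure X₂) : ℝ :=
  ⨅ (I₁ : {f : msupport ξ₁ → Z // Isometry f}) (I₂ : {f : msupport ξ₂ → Z // Isometry f}),
    W2sq (pushSupp ξ₁ I₁.1) (pushSupp ξ₂ I₂.1)

/-- Weak convergence of a sequence of measures. -/
def WeakConv {Z : Type*} [TopologicalSpace Z] [MeasurableSpace Z]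
    (μs : ℕ → Measure Z) (μ : Measure Z) : Prop :=
  ∀ φ : Z → ℝ, Continuous φ →
    Tendsto (fun n => ∫ z, φ z ∂(μs n)) atTop (nhds (∫ z, φ z ∂μ))

/-- The integrand of `GWobj` is a square, so no integrability is needed. -/
lemma GWsq_nonneg {X Y : Type*} [MetricSpace X] [MetricSpace Y]
    [MeasurableSpace X] [MeasurableSpace Y] (ξ : Measure X) (ν : Measure Y) :
    0 ≤ GWsq ξ ν :=
  Real.iInf_nonneg fun _ => integral_nonneg fun _ => sq_nonneg _

lemma EWobj_nonneg {X₁ X₂ Z : Type*} [MetricSpace X₁] [MetricSpace X₂] [MetricSpace Z]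
    [MeasurableSpace X₁] [MeasurableSpace X₂] [MeasurableSpace Z]
    {lam : ℝ} (hlam : 0 ≤ lam) (ξ₁ : Measure X₁) (ξ₂ : Measure X₂) (π : Measure (Z × Z)) :
    0 ≤ EWobj lam ξ₁ ξ₂ π :=
  add_nonneg (integral_nonneg fun _ => sq_nonneg _)
    (mul_nonneg hlam (add_nonneg (GWsq_nonneg _ _) (GWsq_nonneg _ _)))

/-- The transport cost of any probability measure on `Z × Z` is at most the squared diameter. -/
lemma integral_dist_sq_le {Z : Type*} [MetricSpace Z] [CompactSpace Z] [MeasurableSpace Z]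
    (π : Measure (Z × Z)) [IsProbabilityMeasure π] :
    ∫ p : Z × Z, dist p.1 p.2 ^ 2 ∂π ≤ Metric.diam (Set.univ : Set Z) ^ 2 := by
  have h : ∀ p : Z × Z, dist p.1 p.2 ^ 2 ≤ Metric.diam (Set.univ : Set Z) ^ 2 := fun p =>
    pow_le_pow_left₀ dist_nonneg
      (Metric.dist_le_diam_of_mem isCompact_univ.isBounded (Set.mem_univ _) (Set.mem_univ _)) 2
  calc ∫ p : Z × Z, dist p.1 p.2 ^ 2 ∂π
      ≤ ∫ _ : Z × Z, Metric.diam (Set.univ : Set Z) ^ 2 ∂π :=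
        integral_mono_of_nonneg (Eventually.of_forall fun _ => sq_nonneg _)
          (integrable_const _) (Eventually.of_forall h)
    _ = Metric.diam (Set.univ : Set Z) ^ 2 := by simp

theorem stmt17
    {X₁ X₂ Z : Type*} [MetricSpace X₁] [CompactSpace X₁] [MetricSpace X₂] [CompactSpace X₂]
    [MetricSpace Z] [CompactSpace Z]
    [MeasurableSpace X₁] [BorelSpace X₁] [MeasurableSpace X₂] [BorelSpace X₂]
    [MeasurableSpace Z] [BorelSpace Z]
    (ξ₁ : Measure X₁) (ξ₂ : Measure X₂) [IsProbabilityMeasure ξ₁] [IsProbabilityMeasure ξ₂]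
    (lam : ℝ) (hlam : 0 < lam)
    (π : Measure (Z × Z)) [IsProbabilityMeasure π]
    (hmin : EWobj lam ξ₁ ξ₂ π = EWlamSq Z lam ξ₁ ξ₂) :
    GWsq ξ₁ (π.map Prod.fst) + GWsq ξ₂ (π.map Prod.snd)
      ≤ (Metric.diam (Set.univ : Set Z)) ^ 2 / lam
        + (⨅ ζ : {ζ : Measure Z // IsProbabilityMeasure ζ}, GWsq ξ₁ ζ.1)
        + (⨅ ζ : {ζ : Measure Z // IsProbabilityMeasure ζ}, GWsq ξ₂ ζ.1) := by
  -- The first marginal of `π` witnesses that there are probability measures on `Z`, so that the two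
  -- infima on the right range over a nonempty type.
  have : Nonempty {ζ : Measure Z // IsProbabilityMeasure ζ} :=
    ⟨⟨π.map Prod.fst, Measure.isProbabilityMeasure_map measurable_fst.aemeasurable⟩⟩
  set S := GWsq ξ₁ (π.map Prod.fst) + GWsq ξ₂ (π.map Prod.snd) with hS
  have key : ∀ ζ₁ ζ₂ : {ζ : Measure Z // IsProbabilityMeasure ζ},
      S ≤ Metric.diam (Set.univ : Set Z) ^ 2 / lam + GWsq ξ₁ ζ₁.1 + GWsq ξ₂ ζ₂.1 := by
    rintro ⟨ζ₁, h₁⟩ ⟨ζ₂, h₂⟩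
    have hle : EWlamSq Z lam ξ₁ ξ₂ ≤ EWobj lam ξ₁ ξ₂ (ζ₁.prod ζ₂) :=
      ciInf_le (f := fun π : {π : Measure (Z × Z) // IsProbabilityMeasure π} =>
          EWobj lam ξ₁ ξ₂ π.1)
        ⟨0, by rintro _ ⟨ρ, rfl⟩; exact EWobj_nonneg hlam.le ξ₁ ξ₂ ρ.1⟩
        ⟨ζ₁.prod ζ₂, inferInstance⟩
    have hfst : (ζ₁.prod ζ₂).map Prod.fst = ζ₁ := by simp
    have hsnd : (ζ₁.prod ζ₂).map Prod.snd = ζ₂ := by simp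
    rw [← hmin] at hle
    unfold EWobj at hle
    rw [hfst, hsnd, ← hS] at hle
    have hcost := integral_dist_sq_le (ζ₁.prod ζ₂)
    have hpos : 0 ≤ ∫ p : Z × Z, dist p.1 p.2 ^ 2 ∂π := integral_nonneg fun _ => sq_nonneg _
    have hdiv : S - (GWsq ξ₁ ζ₁ + GWsq ξ₂ ζ₂) ≤ Metric.diam (Set.univ : Set Z) ^ 2 / lam := by
      rw [le_div_iff₀ hlam]
      linarith
    simp only
    linarith
  have step : ∀ ζ₁ : {ζ : Measure Z // IsProbabilityMeasure ζ},
      S - Metric.diam (Set.univ : Set Z) ^ 2 / lam - GWsq ξ₁ ζ₁.1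
        ≤ ⨅ ζ : {ζ : Measure Z // IsProbabilityMeasure ζ}, GWsq ξ₂ ζ.1 :=
    fun ζ₁ => le_ciInf fun ζ₂ => by linarith [key ζ₁ ζ₂]
  have hinf : S - Metric.diam (Set.univ : Set Z) ^ 2 / lam
        - (⨅ ζ : {ζ : Measure Z // IsProbabilityMeasure ζ}, GWsq ξ₂ ζ.1)
        ≤ ⨅ ζ : {ζ : Measure Z // IsProbabilityMeasure ζ}, GWsq ξ₁ ζ.1 :=
    le_ciInf fun ζ₁ => by linarith [step ζ₁]
  linarith
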